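/- Let p ≥ 2, c ≥ 1, and N be integers, and let d₁, …, d_c be natural numbers with each dᵢ ≥ p. For each i let rᵢ ∈ {0, …, p − 1} be the residue of dᵢ modulo p, and set δ := ((p + 1)/p)·Σᵢ (dᵢ − rᵢ) − N − 1 (an integer, since p divides each dᵢ − rᵢ). Suppose p·(N + 2p − 2) + c·(p² − 1) ≤ (p + 1)·Σᵢ dᵢ and Σᵢ dᵢ ≤ N + p − 2. Then: (i) 2c ≤ N − c + 3; (ii) c ≤ N − c − 1; (iii) 2c ≤ (N − 2c − 1)·(N − 2c − 2) and 2c ≤ (N − 2c − 1)·(N − 2c); (iv) δ ≥ 2p − 3 and ⌊(δ + 3)/2⌋ ≥ p; in particular δ > 0 when p ≥ 2. -/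

import Mathlib

/-- The complete numerical content of the proof of the main theorem.  Here
`r i` is the residue of `d i` modulo `p`, and `δ` is the integer
`((p + 1)/p)·Σᵢ (dᵢ − rᵢ) − N − 1`, characterized by
`p·(δ + N + 1) = (p + 1)·Σᵢ (dᵢ − rᵢ)`. -/
theorem stmt_11 (p c : ℕ) (hp : 2 ≤ p) (hc : 1 ≤ c) (N : ℤ)
    (d r : Fin c → ℕ) (hd : ∀ i, p ≤ d i) (hr : ∀ i, r i = d i % p)
    (δ : ℤ) (hδ : (p : ℤ) * (δ + N + 1) = ((p : ℤ) + 1) * ∑ i, ((d i : ℤ) - (r i : ℤ)))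
    (h1 : (p : ℤ) * (N + 2 * p - 2) + c * ((p : ℤ) ^ 2 - 1) ≤
      ((p : ℤ) + 1) * ∑ i, (d i : ℤ))
    (h2 : ∑ i, (d i : ℤ) ≤ N + p - 2) :
    2 * (c : ℤ) ≤ N - c + 3 ∧
    (c : ℤ) ≤ N - c - 1 ∧
    (2 * (c : ℤ) ≤ (N - 2 * c - 1) * (N - 2 * c - 2) ∧
      2 * (c : ℤ) ≤ (N - 2 * c - 1) * (N - 2 * c)) ∧
    (2 * (p : ℤ) - 3 ≤ δ ∧ (p : ℤ) ≤ (δ + 3) / 2 ∧ 0 < δ) := by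
  have hR : ∑ i, (r i : ℤ) ≤ c * ((p : ℤ) - 1) := by
    have h : ∀ i ∈ Finset.univ, (r i : ℤ) ≤ (p : ℤ) - 1 := by
      intro i _
      have := Nat.mod_lt (d i) (show p > 0 by omega)
      rw [← hr i] at this
      omega
    have := Finset.sum_le_card_nsmul _ _ _ h
    simpa using this
  rw [Finset.sum_sub_distrib] at hδ
  generalize ∑ i, (d i : ℤ) = S at *
  generalize ∑ i, (r i : ℤ) = R at *
  have hp' : (2 : ℤ) ≤ p := by exact_mod_cast hp
  have hc' : (1 : ℤ) ≤ c := by exact_mod_cast hc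
  generalize (p : ℤ) = q at *
  generalize (c : ℤ) = k at *
  have e1 : (q + 1) * S ≤ (q + 1) * (N + q - 2) :=
    mul_le_mul_of_nonneg_left h2 (by linarith)
  have e2 : (q + 1) * R ≤ (q + 1) * (k * (q - 1)) :=
    mul_le_mul_of_nonneg_left hR (by linarith)
  have e3 : q ^ 2 - q + 2 + k * (q ^ 2 - 1) ≤ N := by nlinarith
  have e4 : 3 * k ≤ k * (q ^ 2 - 1) := by
    have : 3 ≤ q ^ 2 - 1 := by nlinarith
    nlinarith
  have e5 : 3 * k + 4 ≤ N := by nlinarith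
  have e6 : q * (N + 2 * q - 2) ≤ q * (δ + N + 1) := by nlinarith
  have e7 : N + 2 * q - 2 ≤ δ + N + 1 := le_of_mul_le_mul_left e6 (by linarith)
  refine ⟨by linarith, by linarith, ⟨by nlinarith, by nlinarith⟩, by linarith, by omega, by linarith⟩
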